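/- arXiv:1712.03336 — 5 statements merged into one kernel-verified Lean document; each statement's English description precedes it below -/
import Mathlib

section
/- Suppose incentive compatibility holds, i.e., ṽ(t) ≥ v(τ, t) for all τ, t ∈ [a, ā]. Then the envelope formula holds: for every t ∈ [a, ā], ṽ(t) = ṽ(a) + θ ∫_a^t p̃(τ) dτ. (Here p̃ is monotone increasing under incentive compatibility, hence integrable on [a, t].) This is the necessity part (ii) of Lemma 1. -/
/-!
Incentive compatibility says that the line `t ↦ v(τ, t)` of slope `θ p̃(τ)` supports `ṽ` from below
at `τ`, so `θ p̃` selects a subgradient of `ṽ`. Exchanging the two points in the subgradient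
inequality traps the increments of `ṽ` between those of two supporting lines. Hence `θ p̃` is
monotone, `ṽ` is Lipschitz on compact intervals, and `ṽ' = θ p̃` wherever `θ p̃` is continuous, that
is, off a countable set. The fundamental theorem of calculus with countably many exceptional points
then gives the envelope formula.
-/

open Set MeasureTheory
open scoped NNReal

/-- `g` selects a subgradient of `f` at each point of `S`, in the sense that the supporting line
of slope `g s` through `(s, f s)` is only required to lie below `f` on `S`. Incentive compatibility
is an instance, with `f` the truthful utility and `g` the scaled allocation. -/
def IsSubgradientOn (f g : ℝ → ℝ) (S : Set ℝ) : Prop :=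
  ∀ s ∈ S, ∀ t ∈ S, f s + g s * (t - s) ≤ f t

namespace IsSubgradientOn

variable {f g : ℝ → ℝ} {S T : Set ℝ} {s t : ℝ}

theorem mono (h : IsSubgradientOn f g S) (hTS : T ⊆ S) : IsSubgradientOn f g T :=
  fun s hs t ht => h s (hTS hs) t (hTS ht)

theorem le_add_mul_sub (h : IsSubgradientOn f g S) (hs : s ∈ S) (ht : t ∈ S) :
    f t ≤ f s + g t * (t - s) := by
  linarith [h t ht s hs]

theorem monotoneOn (h : IsSubgradientOn f g S) : MonotoneOn g S := by
  intro s hs t ht hst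
  rcases hst.eq_or_lt with rfl | hlt
  · exact le_rfl
  · have increments : g s * (t - s) ≤ g t * (t - s) := by
      linarith [h s hs t ht, h.le_add_mul_sub hs ht]
    exact le_of_mul_le_mul_right increments (sub_pos.2 hlt)

theorem lipschitzOnWith (h : IsSubgradientOn f g S) {K : ℝ≥0} (hK : ∀ s ∈ S, |g s| ≤ K) :
    LipschitzOnWith K f S := by
  refine LipschitzOnWith.of_le_add_mul K fun t ht s hs => ?_
  calc f t ≤ f s + g t * (t - s) := h.le_add_mul_sub hs ht
    _ ≤ f s + |g t| * |t - s| := by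
      rw [← abs_mul]
      gcongr
      exact le_abs_self _
    _ ≤ f s + K * dist t s := by
      rw [Real.dist_eq]
      gcongr
      exact hK t ht

theorem continuousOn_uIcc (h : IsSubgradientOn f g (uIcc s t)) : ContinuousOn f (uIcc s t) := by
  obtain ⟨C, hC⟩ := (isCompact_uIcc (a := g s) (b := g t)).isBounded.exists_norm_le
  have bounded : ∀ τ ∈ uIcc s t, |g τ| ≤ C.toNNReal := fun τ hτ =>
    (hC _ (h.monotoneOn.mapsTo_uIcc hτ)).trans (Real.le_coe_toNNReal C)
  exact (h.lipschitzOnWith bounded).continuousOn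

theorem abs_sub_sub_mul_le (h : IsSubgradientOn f g S) (hs : s ∈ S) (ht : t ∈ S) :
    |f t - f s - (t - s) * g s| ≤ |(t - s) * (g t - g s)| := by
  have lower : 0 ≤ f t - f s - (t - s) * g s := by linarith [h s hs t ht]
  rw [abs_of_nonneg lower]
  refine le_trans ?_ (le_abs_self _)
  linarith [h.le_add_mul_sub hs ht]

theorem hasDerivWithinAt (h : IsSubgradientOn f g S) (hs : s ∈ S)
    (hg : ContinuousWithinAt g S s) : HasDerivWithinAt f (g s) S s := by
  have oscillation : (fun t => g t - g s) =o[nhdsWithin s S] fun _ => (1 : ℝ) :=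
    (Asymptotics.isLittleO_one_iff ℝ).2 (tendsto_sub_nhds_zero_iff.2 hg)
  have product : (fun t => (t - s) * (g t - g s)) =o[nhdsWithin s S] fun t => t - s := by
    simpa only [mul_one] using (Asymptotics.isBigO_refl _ _).mul_isLittleO oscillation
  rw [hasDerivWithinAt_iff_isLittleO]
  refine Asymptotics.IsBigO.trans_isLittleO (.of_bound' ?_) product
  filter_upwards [self_mem_nhdsWithin] with t ht
  exact h.abs_sub_sub_mul_le hs ht

theorem intervalIntegrable (h : IsSubgradientOn f g (uIcc s t)) :
    IntervalIntegrable g volume s t :=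
  h.monotoneOn.intervalIntegrable

theorem integral_eq_sub (h : IsSubgradientOn f g (uIcc s t)) :
    ∫ τ in s..t, g τ = f t - f s := by
  refine integral_eq_of_hasDerivAt_off_countable f g
    h.monotoneOn.countable_not_continuousWithinAt h.continuousOn_uIcc ?_ h.intervalIntegrable
  rintro τ ⟨hτ, hcont⟩
  have mem : τ ∈ uIcc s t := Ioo_subset_Icc_self hτ
  have cont : ContinuousWithinAt g (uIcc s t) τ := by
    by_contra hnot
    exact hcont ⟨mem, hnot⟩
  exact (h.hasDerivWithinAt mem cont).hasDerivAt (Icc_mem_nhds hτ.1 hτ.2)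

end IsSubgradientOn

theorem isSubgradientOn_of_incentiveCompatible {θ : ℝ} {p x : ℝ → ℝ} {S : Set ℝ}
    (hIC : ∀ τ ∈ S, ∀ t ∈ S, θ * t * p τ - x τ ≤ θ * t * p t - x t) :
    IsSubgradientOn (fun t => θ * t * p t - x t) (fun t => θ * p t) S := by
  intro τ hτ t ht
  linarith [hIC τ hτ t ht]

theorem stmt_2_general {θ : ℝ} (hθ : θ ≠ 0) {p x : ℝ → ℝ} {S : Set ℝ} (hS : S.OrdConnected)
    (hIC : ∀ τ ∈ S, ∀ t ∈ S, θ * t * p τ - x τ ≤ θ * t * p t - x t)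
    {s t : ℝ} (hs : s ∈ S) (ht : t ∈ S) :
    IntervalIntegrable p volume s t ∧
      θ * t * p t - x t = (θ * s * p s - x s) + θ * ∫ τ in s..t, p τ := by
  have subgradient := (isSubgradientOn_of_incentiveCompatible hIC).mono (hS.uIcc_subset hs ht)
  constructor
  · simpa [hθ] using subgradient.intervalIntegrable.const_mul θ⁻¹
  · rw [← intervalIntegral.integral_const_mul, subgradient.integral_eq_sub]
    ring

/-- Lemma 1, necessity part (ii) (envelope formula): under incentive
compatibility, ṽ(t) = ṽ(a) + θ ∫_a^t p̃(τ) dτ for every t ∈ [a, ā]. -/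
theorem stmt_2 (θ a abar : ℝ) (hθ : 0 < θ) (hab : a < abar)
    (ptld xtld : ℝ → ℝ)
    (hIC : ∀ τ ∈ Set.Icc a abar, ∀ t ∈ Set.Icc a abar,
        θ * t * ptld τ - xtld τ ≤ θ * t * ptld t - xtld t) :
    ∀ t ∈ Set.Icc a abar,
      θ * t * ptld t - xtld t
        = (θ * a * ptld a - xtld a) + θ * ∫ τ in a..t, ptld τ := by
  intro t ht
  exact (stmt_2_general hθ.ne' ordConnected_Icc hIC (left_mem_Icc.2 hab.le) ht).2
end

section
/- Suppose (i) p̃ is monotone increasing and nonnegative on [a, ā]; (ii) ṽ(t) = ṽ(a) + θ ∫_a^t p̃(τ) dτ for all t ∈ [a, ā]; and (iii) ṽ(a) ≥ 0. Then incentive compatibility holds (ṽ(t) ≥ v(τ, t) for all τ, t ∈ [a, ā]) and individual rationality holds (ṽ(t) ≥ 0 for all t ∈ [a, ā]). (Sufficiency part of Lemma 1.) -/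
/-!
With linear utilities, `v(τ, t) = ṽ(τ) + (t - τ) θ p̃(τ)`, so incentive compatibility says that the
line of slope `θ p̃(τ)` through `(τ, ṽ(τ))` lies below the graph of `ṽ`. By the envelope formula
`ṽ` is a primitive of the monotone function `θ p̃`, so it is convex and `θ p̃(τ)` is a subgradient
at `τ`. Individual rationality holds because this primitive starts at a nonnegative value and has
a nonnegative integrand.
-/

open Set MeasureTheory

theorem sub_mul_le_integral_of_monotoneOn {f : ℝ → ℝ} {s t : ℝ} (hf : MonotoneOn f (uIcc s t)) :
    (t - s) * f s ≤ ∫ x in s..t, f x := by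
  have hint : IntervalIntegrable f volume s t := hf.intervalIntegrable
  rcases le_total s t with hst | hts
  · rw [uIcc_of_le hst] at hf
    calc (t - s) * f s = ∫ _ in s..t, f s := by simp
      _ ≤ ∫ x in s..t, f x :=
        intervalIntegral.integral_mono_on hst intervalIntegrable_const hint fun x hx =>
          hf (left_mem_Icc.2 hst) hx hx.1
  · rw [uIcc_of_ge hts] at hf
    calc (t - s) * f s = -∫ _ in t..s, f s := by simp [← neg_mul]
      _ ≤ -∫ x in t..s, f x :=
        neg_le_neg <| intervalIntegral.integral_mono_on hts hint.symm intervalIntegrable_const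
          fun x hx => hf hx (right_mem_Icc.2 hts) hx.2
      _ = ∫ x in s..t, f x := (intervalIntegral.integral_symm t s).symm

theorem add_sub_mul_le_of_eq_add_integral {S : Set ℝ} {u g : ℝ → ℝ} {c s t : ℝ}
    (hS : S.OrdConnected) (hg : MonotoneOn g S) (hu : ∀ r ∈ S, u r = u c + ∫ x in c..r, g x)
    (hc : c ∈ S) (hs : s ∈ S) (ht : t ∈ S) :
    u s + (t - s) * g s ≤ u t := by
  have hg_uIcc {q r : ℝ} (hq : q ∈ S) (hr : r ∈ S) : MonotoneOn g (uIcc q r) :=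
    hg.mono (hS.uIcc_subset hq hr)
  have hsplit : (∫ x in c..s, g x) + ∫ x in s..t, g x = ∫ x in c..t, g x :=
    intervalIntegral.integral_add_adjacent_intervals
      (hg_uIcc hc hs).intervalIntegrable (hg_uIcc hs ht).intervalIntegrable
  calc u s + (t - s) * g s ≤ u s + ∫ x in s..t, g x := by
        gcongr
        exact sub_mul_le_integral_of_monotoneOn (hg_uIcc hs ht)
    _ = u t := by rw [hu s hs, hu t ht, ← hsplit, add_assoc]

/-- The interim utility `v(τ, t)` of a user of type `t` who reports `τ`, under the interim
allocation `p` and payment `x`; the truthful utility `ṽ(t)` is its diagonal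
`interimUtility θ p x t t`. -/
def interimUtility (θ : ℝ) (p x : ℝ → ℝ) (τ t : ℝ) : ℝ :=
  θ * t * p τ - x τ

namespace interimUtility

variable {θ : ℝ} {p x : ℝ → ℝ}

theorem eq_diag_add_sub_mul (τ t : ℝ) :
    interimUtility θ p x τ t = interimUtility θ p x τ τ + (t - τ) * (θ * p τ) := by
  unfold interimUtility
  ring

theorem le_diag_of_envelope {S : Set ℝ} {c τ t : ℝ} (hθ : 0 ≤ θ)
    (hS : S.OrdConnected) (hp : MonotoneOn p S)
    (henv : ∀ r ∈ S, interimUtility θ p x r r = interimUtility θ p x c c + θ * ∫ y in c..r, p y)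
    (hc : c ∈ S) (hτ : τ ∈ S) (ht : t ∈ S) :
    interimUtility θ p x τ t ≤ interimUtility θ p x t t := by
  have hslope : MonotoneOn (fun r => θ * p r) S := fun _ hq _ hr hqr =>
    mul_le_mul_of_nonneg_left (hp hq hr hqr) hθ
  rw [eq_diag_add_sub_mul τ t]
  refine add_sub_mul_le_of_eq_add_integral (u := fun r => interimUtility θ p x r r)
    hS hslope (fun r hr => ?_) hc hτ ht
  rw [intervalIntegral.integral_const_mul, henv r hr]

theorem diag_nonneg_of_envelope {a t : ℝ} (hθ : 0 ≤ θ) (hat : a ≤ t)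
    (hp : ∀ r ∈ Icc a t, 0 ≤ p r)
    (henv : interimUtility θ p x t t = interimUtility θ p x a a + θ * ∫ y in a..t, p y)
    (ha : 0 ≤ interimUtility θ p x a a) :
    0 ≤ interimUtility θ p x t t := by
  rw [henv]
  exact add_nonneg ha (mul_nonneg hθ (intervalIntegral.integral_nonneg hat hp))

end interimUtility

/-- Lemma 1, sufficiency part: if the interim allocation p̃ is monotone increasing
and nonnegative on [a, ā], the envelope formula holds and ṽ(a) ≥ 0, then incentive
compatibility and individual rationality hold. -/
theorem stmt_3 (θ a abar : ℝ) (hθ : 0 < θ) (hab : a < abar)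
    (ptld xtld : ℝ → ℝ)
    (hmono : MonotoneOn ptld (Set.Icc a abar))
    (hnn : ∀ t ∈ Set.Icc a abar, 0 ≤ ptld t)
    (henv : ∀ t ∈ Set.Icc a abar,
        θ * t * ptld t - xtld t
          = (θ * a * ptld a - xtld a) + θ * ∫ τ in a..t, ptld τ)
    (hva : 0 ≤ θ * a * ptld a - xtld a) :
    (∀ τ ∈ Set.Icc a abar, ∀ t ∈ Set.Icc a abar,
        θ * t * ptld τ - xtld τ ≤ θ * t * ptld t - xtld t) ∧
    (∀ t ∈ Set.Icc a abar, 0 ≤ θ * t * ptld t - xtld t) := by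
  constructor
  · intro τ hτ t ht
    exact interimUtility.le_diag_of_envelope hθ.le ordConnected_Icc hmono henv
      (left_mem_Icc.2 hab.le) hτ ht
  · intro t ht
    have hnn_Icc : ∀ r ∈ Icc a t, 0 ≤ ptld r := fun r hr => hnn r (Icc_subset_Icc_right ht.2 hr)
    exact interimUtility.diag_nonneg_of_envelope hθ.le ht.1 hnn_Icc (henv t ht) hva
end

section
/- Fix j ∈ {1,…,n}. Suppose the mechanism (p, x) satisfies fraction feasibility (FF), x_j is integrable, and the envelope condition holds for user j: ṽ_j(t) = ṽ_j(a_j) + θ ∫_{a_j}^{t} p̃_j(τ) dτ for all t ∈ T_j, with p̃_j monotone increasing. Then the expected payment of user j satisfies ∫_T x_j(t) f(t) dt = −ṽ_j(a_j) + θ ∫_T [ t_j − (1 − F_j(t_j))/f_j(t_j) ] (∑_{i∈S_j} p_i(t)) f(t) dt. (Per-user payment identity, equation (45) in the proof of Lemma 2.) -/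
open MeasureTheory Finset

noncomputable section Caching

/-- The joint type space T = ∏_j [a_j, ā_j]. -/
def Tspace {n : ℕ} (a abar : Fin n → ℝ) : Set (Fin n → ℝ) :=
  Set.univ.pi fun j => Set.Icc (a j) (abar j)

/-- The joint density f(t) = ∏_j f_j(t_j). -/
def jointDens {n : ℕ} (f : Fin n → ℝ → ℝ) (t : Fin n → ℝ) : ℝ :=
  ∏ j, f j (t j)

/-- Interim allocation p̃_j(τ) = ∫_{T_{−j}} (∑_{i∈S_j} p_i(τ, t_{−j})) f_{−j}(t_{−j}) dt_{−j},
written as an integral over the whole type space against the joint density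
(the coordinate j integrates out since f_j is a probability density). -/
def interimAlloc {n m : ℕ} (a abar : Fin n → ℝ) (f : Fin n → ℝ → ℝ)
    (S : Fin n → Finset (Fin m)) (p : (Fin n → ℝ) → Fin m → ℝ)
    (j : Fin n) (τ : ℝ) : ℝ :=
  ∫ t in Tspace a abar, (∑ i ∈ S j, p (Function.update t j τ) i) * jointDens f t

/-- Interim payment x̃_j(τ) = ∫_{T_{−j}} x_j(τ, t_{−j}) f_{−j}(t_{−j}) dt_{−j}. -/
def interimPay {n : ℕ} (a abar : Fin n → ℝ) (f : Fin n → ℝ → ℝ)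
    (x : (Fin n → ℝ) → Fin n → ℝ) (j : Fin n) (τ : ℝ) : ℝ :=
  ∫ t in Tspace a abar, x (Function.update t j τ) j * jointDens f t

/-- Truthful interim utility ṽ_j(t) = θ t p̃_j(t) − x̃_j(t). -/
def vtld {n m : ℕ} (θ : ℝ) (a abar : Fin n → ℝ) (f : Fin n → ℝ → ℝ)
    (S : Fin n → Finset (Fin m)) (p : (Fin n → ℝ) → Fin m → ℝ)
    (x : (Fin n → ℝ) → Fin n → ℝ) (j : Fin n) (t : ℝ) : ℝ :=
  θ * t * interimAlloc a abar f S p j t - interimPay a abar f x j t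

/-!
By Fubini, the expected payment of user `j` is the mean of the interim payment `x̃_j` under `f_j`.
The envelope condition rewrites `x̃_j(τ)` as `θ (τ p̃_j(τ) - ∫_{a_j}^τ p̃_j) - ṽ_j(a_j)`, and
integration by parts against `F_j - 1`, which vanishes at `ā_j`, turns the mean of `∫_{a_j}^τ p̃_j`
into `∫ (1 - F_j) p̃_j`. Fubini in the other direction returns to an integral over `T`.
-/

theorem mul_prod_update {ι M : Type*} [Fintype ι] [DecidableEq ι] [CommMonoid M] {X : ι → Type*}
    (g : ∀ i, X i → M) (j : ι) (t : ∀ i, X i) (y : X j) :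
    g j (t j) * ∏ i, g i (Function.update t j y i) = g j y * ∏ i, g i (t i) := by
  have off_diag : ∏ i ∈ univ.erase j, g i (Function.update t j y i) =
      ∏ i ∈ univ.erase j, g i (t i) :=
    prod_congr rfl fun i hi => by rw [Function.update_of_ne (ne_of_mem_erase hi)]
  rw [← mul_prod_erase univ _ (mem_univ j), ← mul_prod_erase univ (fun i => g i (t i)) (mem_univ j),
    Function.update_self, off_diag, mul_left_comm]

theorem abs_sum_le_of_nonneg_of_sum_univ_le {ι R : Type*} [Fintype ι] [AddCommGroup R]
    [LinearOrder R] [IsOrderedAddMonoid R] {q : ι → R} {C : R} (s : Finset ι)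
    (hq : ∀ i, 0 ≤ q i) (hC : ∑ i, q i ≤ C) : |∑ i ∈ s, q i| ≤ C := by
  rw [abs_of_nonneg (sum_nonneg fun i _ => hq i)]
  exact (sum_le_univ_sum_of_nonneg hq).trans hC

section ProductMeasure

variable {ι : Type*} [DecidableEq ι] {X : ι → Type*}

/-- The involution of `X j × ∏ i, X i` that exchanges a point of `X j` with the `j`-th coordinate.
It expresses Fubini's theorem in the coordinate `j` without splitting the product. -/
def exchangeCoord (j : ι) (z : X j × ∀ i, X i) : X j × ∀ i, X i :=
  (z.2 j, Function.update z.2 j z.1)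

theorem exchangeCoord_preimage_prod_pi (j : ι) (s : Set (X j)) (u : ∀ i, Set (X i)) :
    exchangeCoord j ⁻¹' (s ×ˢ Set.univ.pi u) = u j ×ˢ Set.univ.pi (Function.update u j s) := by
  ext ⟨y, t⟩
  simp only [exchangeCoord, Set.mem_preimage, Set.mem_prod, Set.mem_univ_pi,
    Function.forall_update_iff u fun i v => t i ∈ v,
    Function.forall_update_iff t fun i w => w ∈ u i]
  tauto

theorem mul_mul_prod_comp_exchangeCoord [Fintype ι] {M : Type*} [CommMonoid M]
    (G : (∀ i, X i) → M) (g : ∀ i, X i → M) (j : ι) :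
    (fun z : X j × ∀ i, X i => g j z.1 * (G z.2 * ∏ i, g i (z.2 i))) ∘ exchangeCoord j =
      fun z => G (Function.update z.2 j z.1) * (∏ i, g i (z.2 i)) * g j z.1 := by
  ext ⟨y, t⟩
  simp only [Function.comp_apply, exchangeCoord, mul_left_comm (g j (t j)), mul_prod_update]
  rw [mul_comm (g j y), mul_assoc]

variable [∀ i, MeasurableSpace (X i)]

theorem measurable_exchangeCoord (j : ι) : Measurable (exchangeCoord (X := X) j) :=
  ((measurable_pi_apply j).comp measurable_snd).prodMk (measurable_update'.comp measurable_swap)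

variable [Fintype ι] {ν : ∀ i, Measure (X i)} [∀ i, SigmaFinite (ν i)]

theorem measurePreserving_exchangeCoord (j : ι) :
    MeasurePreserving (exchangeCoord j) ((ν j).prod (.pi ν)) ((ν j).prod (.pi ν)) := by
  refine ⟨measurable_exchangeCoord j, .symm ?_⟩
  refine Measure.prod_eq_generateFrom MeasurableSpace.generateFrom_measurableSet generateFrom_pi
    MeasurableSpace.isPiSystem_measurableSet isPiSystem_pi (ν j).toFiniteSpanningSetsIn
    (.pi fun i => (ν i).toFiniteSpanningSetsIn) ?_
  rintro s hs _ ⟨u, hu, rfl⟩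
  have hu_meas : MeasurableSet (Set.univ.pi u) := .univ_pi fun i => hu i (Set.mem_univ i)
  rw [Measure.map_apply (measurable_exchangeCoord j) (hs.prod hu_meas),
    exchangeCoord_preimage_prod_pi, Measure.prod_prod, Measure.pi_pi, Measure.pi_pi]
  exact mul_prod_update (fun i => ν i) j u s

theorem quasiMeasurePreserving_update (j : ι) :
    Measure.QuasiMeasurePreserving (fun z : X j × ∀ i, X i => Function.update z.2 j z.1)
      ((ν j).prod (.pi ν)) (.pi ν) :=
  Measure.quasiMeasurePreserving_snd.comp
    (measurePreserving_exchangeCoord j).quasiMeasurePreserving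

variable {𝕜 : Type*} [RCLike 𝕜] {G : (∀ i, X i) → 𝕜} {g : ∀ i, X i → 𝕜} {j : ι}

theorem integrable_update_mul_prod_mul (hgj : Integrable (g j) (ν j))
    (hG : Integrable (fun t => G t * ∏ i, g i (t i)) (.pi ν)) :
    Integrable (fun z : X j × ∀ i, X i =>
      G (Function.update z.2 j z.1) * (∏ i, g i (z.2 i)) * g j z.1) ((ν j).prod (.pi ν)) := by
  rw [← mul_mul_prod_comp_exchangeCoord]
  exact (measurePreserving_exchangeCoord j).integrable_comp_of_integrable (hgj.mul_prod hG)

theorem integrable_integral_update_mul_prod_mul (hgj : Integrable (g j) (ν j))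
    (hG : Integrable (fun t => G t * ∏ i, g i (t i)) (.pi ν)) :
    Integrable (fun y => (∫ t, G (Function.update t j y) * ∏ i, g i (t i) ∂.pi ν) * g j y)
      (ν j) := by
  simpa only [integral_mul_const] using
    (integrable_update_mul_prod_mul hgj hG).integral_prod_left

theorem integral_mul_integral_mul_prod (hgj : Integrable (g j) (ν j))
    (hG : Integrable (fun t => G t * ∏ i, g i (t i)) (.pi ν)) :
    (∫ y, g j y ∂ν j) * ∫ t, G t * ∏ i, g i (t i) ∂.pi ν =
      ∫ y, (∫ t, G (Function.update t j y) * ∏ i, g i (t i) ∂.pi ν) * g j y ∂ν j := by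
  have hexch := measurePreserving_exchangeCoord (ν := ν) j
  have hprod := hgj.mul_prod hG
  calc (∫ y, g j y ∂ν j) * ∫ t, G t * ∏ i, g i (t i) ∂.pi ν
    _ = ∫ z, g j z.1 * (G z.2 * ∏ i, g i (z.2 i)) ∂(ν j).prod (.pi ν) :=
      (integral_prod_mul _ _).symm
    _ = ∫ z, ((fun z => g j z.1 * (G z.2 * ∏ i, g i (z.2 i))) ∘ exchangeCoord j) z
          ∂(ν j).prod (.pi ν) := by
      conv_lhs => rw [← hexch.map_eq]
      exact integral_map hexch.aemeasurable (hexch.map_eq.symm ▸ hprod.aestronglyMeasurable)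
    _ = ∫ y, (∫ t, G (Function.update t j y) * ∏ i, g i (t i) ∂.pi ν) * g j y ∂ν j := by
      rw [mul_mul_prod_comp_exchangeCoord,
        integral_prod _ (integrable_update_mul_prod_mul hgj hG)]
      simp only [integral_mul_const]

theorem integrable_integral_update_mul [IsFiniteMeasure (ν j)] {w : (∀ i, X i) → 𝕜} {C : ℝ}
    (hG : AEStronglyMeasurable G (.pi ν)) (hGC : ∀ᵐ t ∂Measure.pi ν, ‖G t‖ ≤ C)
    (hw : Integrable w (.pi ν)) :
    Integrable (fun y => ∫ t, G (Function.update t j y) * w t ∂.pi ν) (ν j) :=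
  ((hw.comp_snd (ν j)).bdd_mul
    (hG.comp_quasiMeasurePreserving (quasiMeasurePreserving_update j))
    ((quasiMeasurePreserving_update j).ae hGC)).integral_prod_left

end ProductMeasure

theorem integrable_comp_eval_mul_prod {ι 𝕜 : Type*} [Fintype ι] [RCLike 𝕜] {X : ι → Type*}
    [∀ i, MeasurableSpace (X i)] {ν : ∀ i, Measure (X i)} [∀ i, SigmaFinite (ν i)]
    {g : ∀ i, X i → 𝕜} {j : ι} {c : X j → 𝕜} (hg : ∀ i, Integrable (g i) (ν i))
    (hc : Integrable (fun y => c y * g j y) (ν j)) :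
    Integrable (fun t => c (t j) * ∏ i, g i (t i)) (.pi ν) := by
  classical
  have hfactors : ∀ i, Integrable (Function.update g j (fun y => c y * g j y) i) (ν i) :=
    (Function.forall_update_iff g fun i h => Integrable h (ν i)).2 ⟨hc, fun i _ => hg i⟩
  refine (Integrable.fintype_prod_dep hfactors).congr (.of_forall fun t => ?_)
  have off_diag : ∀ i ∈ univ.erase j,
      Function.update g j (fun y => c y * g j y) i (t i) = g i (t i) := fun i hi => by
    rw [Function.update_of_ne (ne_of_mem_erase hi)]
  simp only [← mul_prod_erase univ _ (mem_univ j), prod_congr rfl off_diag, Function.update_self,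
    mul_assoc]

section VirtualValue

open intervalIntegral (continuousOn_primitive_interval')

variable {A g : ℝ → ℝ} {a b : ℝ}

theorem integral_primitive_mul (hA : IntervalIntegrable A volume a b)
    (hg : IntervalIntegrable g volume a b) :
    ∫ τ in a..b, (∫ s in a..τ, A s) * g τ =
      ∫ τ in a..b, ((∫ s in a..b, g s) - ∫ s in a..τ, g s) * A τ := by
  have hprimA := hA.absolutelyContinuousOnInterval_intervalIntegral Set.left_mem_uIcc
  have hprimg := hg.absolutelyContinuousOnInterval_intervalIntegral Set.left_mem_uIcc
  have deriv_primitive : ∀ {h : ℝ → ℝ}, IntervalIntegrable h volume a b →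
      ∀ᵐ τ, τ ∈ Set.uIoc a b → deriv (fun τ => ∫ s in a..τ, h s) τ = h τ := fun hh => by
    filter_upwards [hh.ae_hasDerivAt_integral] with τ hτ hmem
    exact (hτ (Set.uIoc_subset_uIcc hmem) a Set.left_mem_uIcc).deriv
  calc ∫ τ in a..b, (∫ s in a..τ, A s) * g τ
    _ = ∫ τ in a..b, (∫ s in a..τ, A s) * deriv (fun τ => ∫ s in a..τ, g s) τ :=
      intervalIntegral.integral_congr_ae <| (deriv_primitive hg).mono fun τ hτ hmem => by
        rw [hτ hmem]
    _ = (∫ s in a..b, A s) * (∫ s in a..b, g s) -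
          ∫ τ in a..b, deriv (fun τ => ∫ s in a..τ, A s) τ * ∫ s in a..τ, g s := by
      rw [hprimA.integral_mul_deriv_eq_deriv_mul hprimg, intervalIntegral.integral_same, zero_mul,
        sub_zero]
    _ = (∫ s in a..b, A s) * (∫ s in a..b, g s) - ∫ τ in a..b, A τ * ∫ s in a..τ, g s := by
      congr 1
      exact intervalIntegral.integral_congr_ae <| (deriv_primitive hA).mono fun τ hτ hmem => by
        rw [hτ hmem]
    _ = ∫ τ in a..b, ((∫ s in a..b, g s) - ∫ s in a..τ, g s) * A τ := by
      rw [← intervalIntegral.integral_mul_const, ← intervalIntegral.integral_sub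
        (hA.mul_const _) (hA.mul_continuousOn hprimg.continuousOn)]
      exact intervalIntegral.integral_congr fun τ _ => by ring

/-- Myerson's virtual value `τ - (1 - F(τ)) / g(τ)` of a type with density `g` on an interval with
left endpoint `a`, where `F(τ) = ∫_a^τ g`. -/
def virtualValue (a : ℝ) (g : ℝ → ℝ) (τ : ℝ) : ℝ :=
  τ - (1 - ∫ s in a..τ, g s) / g τ

theorem virtualValue_mul {τ : ℝ} (hτ : g τ ≠ 0) :
    virtualValue a g τ * g τ = τ * g τ - (1 - ∫ s in a..τ, g s) := by
  rw [virtualValue, sub_mul, div_mul_cancel₀ _ hτ]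

theorem intervalIntegrable_virtualValue_mul (hg : IntervalIntegrable g volume a b)
    (hg0 : ∀ τ ∈ Set.uIcc a b, g τ ≠ 0) :
    IntervalIntegrable (fun τ => virtualValue a g τ * g τ) volume a b :=
  ((hg.continuousOn_mul continuousOn_id).sub
    (continuousOn_const.sub
      (continuousOn_primitive_interval' hg Set.left_mem_uIcc)).intervalIntegrable).congr
        fun τ hτ => (virtualValue_mul (hg0 τ (Set.uIoc_subset_uIcc hτ))).symm

theorem intervalIntegrable_sub_primitive_mul (hA : IntervalIntegrable A volume a b)
    (hg : IntervalIntegrable g volume a b)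
    (hAg : IntervalIntegrable (fun τ => A τ * g τ) volume a b) :
    IntervalIntegrable (fun τ => (τ * A τ - ∫ s in a..τ, A s) * g τ) volume a b := by
  simpa only [sub_mul, mul_assoc, id] using (hAg.continuousOn_mul continuousOn_id).sub
    (hg.continuousOn_mul (continuousOn_primitive_interval' hA Set.left_mem_uIcc))

theorem integral_virtualValue_mul (hA : IntervalIntegrable A volume a b)
    (hg : IntervalIntegrable g volume a b)
    (hAg : IntervalIntegrable (fun τ => A τ * g τ) volume a b)
    (hg0 : ∀ τ ∈ Set.uIcc a b, g τ ≠ 0) (hg1 : ∫ τ in a..b, g τ = 1) :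
    ∫ τ in a..b, virtualValue a g τ * A τ * g τ =
      ∫ τ in a..b, (τ * A τ - ∫ s in a..τ, A s) * g τ := by
  have hτAg : IntervalIntegrable (fun τ => τ * (A τ * g τ)) volume a b :=
    hAg.continuousOn_mul continuousOn_id
  have htailA : IntervalIntegrable (fun τ => (1 - ∫ s in a..τ, g s) * A τ) volume a b :=
    hA.continuousOn_mul
      (continuousOn_const.sub (continuousOn_primitive_interval' hg Set.left_mem_uIcc))
  have hprimAg : IntervalIntegrable (fun τ => (∫ s in a..τ, A s) * g τ) volume a b :=
    hg.continuousOn_mul (continuousOn_primitive_interval' hA Set.left_mem_uIcc)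
  calc ∫ τ in a..b, virtualValue a g τ * A τ * g τ
    _ = ∫ τ in a..b, (τ * (A τ * g τ) - (1 - ∫ s in a..τ, g s) * A τ) :=
      intervalIntegral.integral_congr fun τ hτ => by
        linear_combination A τ * virtualValue_mul (a := a) (hg0 τ hτ)
    _ = (∫ τ in a..b, τ * (A τ * g τ)) - ∫ τ in a..b, (∫ s in a..τ, A s) * g τ := by
      rw [intervalIntegral.integral_sub hτAg htailA, integral_primitive_mul hA hg, hg1]
    _ = ∫ τ in a..b, (τ * A τ - ∫ s in a..τ, A s) * g τ := by
      rw [← intervalIntegral.integral_sub hτAg hprimAg]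
      exact intervalIntegral.integral_congr fun τ _ => by ring

theorem integral_payment_eq_of_envelope {y : ℝ → ℝ} {θ v : ℝ}
    (hA : IntervalIntegrable A volume a b) (hg : IntervalIntegrable g volume a b)
    (hAg : IntervalIntegrable (fun τ => A τ * g τ) volume a b)
    (hg0 : ∀ τ ∈ Set.uIcc a b, g τ ≠ 0) (hg1 : ∫ τ in a..b, g τ = 1)
    (henv : ∀ τ ∈ Set.uIcc a b, θ * τ * A τ - y τ = v + θ * ∫ s in a..τ, A s) :
    ∫ τ in a..b, y τ * g τ = -v + θ * ∫ τ in a..b, virtualValue a g τ * A τ * g τ := by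
  calc ∫ τ in a..b, y τ * g τ
    _ = ∫ τ in a..b, (-v * g τ + θ * ((τ * A τ - ∫ s in a..τ, A s) * g τ)) :=
      intervalIntegral.integral_congr fun τ hτ => by
        linear_combination -g τ * henv τ hτ
    _ = -v + θ * ∫ τ in a..b, (τ * A τ - ∫ s in a..τ, A s) * g τ := by
      rw [intervalIntegral.integral_add (hg.const_mul _)
        ((intervalIntegrable_sub_primitive_mul hA hg hAg).const_mul θ),
        intervalIntegral.integral_const_mul, intervalIntegral.integral_const_mul, hg1, mul_one]
    _ = -v + θ * ∫ τ in a..b, virtualValue a g τ * A τ * g τ := by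
      rw [integral_virtualValue_mul hA hg hAg hg0 hg1]

end VirtualValue

section TypeSpace

variable {n : ℕ} {a abar : Fin n → ℝ} {f : Fin n → ℝ → ℝ} {G : (Fin n → ℝ) → ℝ} {j : Fin n}

/-- The interim expectation `τ ↦ ∫_{T_{-j}} G(τ, t_{-j}) f_{-j}(t_{-j}) dt_{-j}` of `G`, encoded
as in `interimAlloc` and `interimPay`, its instances for the allocation and the payment. -/
def interimExp (a abar : Fin n → ℝ) (f : Fin n → ℝ → ℝ) (j : Fin n) (G : (Fin n → ℝ) → ℝ)
    (τ : ℝ) : ℝ :=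
  ∫ t in Tspace a abar, G (Function.update t j τ) * jointDens f t

theorem volume_restrict_Tspace (a abar : Fin n → ℝ) :
    volume.restrict (Tspace a abar) =
      Measure.pi fun k => volume.restrict (Set.Icc (a k) (abar k)) := by
  rw [Tspace, volume_pi, Measure.restrict_pi_pi]

theorem measurableSet_Tspace (a abar : Fin n → ℝ) : MeasurableSet (Tspace a abar) :=
  .univ_pi fun _ => measurableSet_Icc

theorem integrableOn_jointDens (hf : ∀ k, IntegrableOn (f k) (Set.Icc (a k) (abar k))) :
    IntegrableOn (jointDens f) (Tspace a abar) := by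
  rw [IntegrableOn, volume_restrict_Tspace]
  exact Integrable.fintype_prod hf

theorem intervalIntegrable_interimExp {C : ℝ} (hab : a j ≤ abar j)
    (hf : ∀ k, IntegrableOn (f k) (Set.Icc (a k) (abar k)))
    (hG : AEStronglyMeasurable G (volume.restrict (Tspace a abar)))
    (hGC : ∀ t ∈ Tspace a abar, |G t| ≤ C) :
    IntervalIntegrable (interimExp a abar f j G) volume (a j) (abar j) := by
  have hGC_ae : ∀ᵐ t ∂volume.restrict (Tspace a abar), ‖G t‖ ≤ C :=
    ae_restrict_of_forall_mem (measurableSet_Tspace a abar) hGC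
  have hdens := integrableOn_jointDens hf
  rw [IntegrableOn] at hdens
  rw [volume_restrict_Tspace] at hGC_ae hdens hG
  rw [intervalIntegrable_iff_integrableOn_Icc_of_le hab]
  unfold interimExp
  rw [volume_restrict_Tspace]
  exact integrable_integral_update_mul hG hGC_ae hdens

theorem intervalIntegrable_interimExp_mul (hab : a j ≤ abar j)
    (hf : IntegrableOn (f j) (Set.Icc (a j) (abar j)))
    (hG : IntegrableOn (fun t => G t * jointDens f t) (Tspace a abar)) :
    IntervalIntegrable (fun τ => interimExp a abar f j G τ * f j τ) volume (a j) (abar j) := by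
  rw [intervalIntegrable_iff_integrableOn_Icc_of_le hab]
  unfold interimExp
  rw [IntegrableOn, volume_restrict_Tspace] at hG
  rw [volume_restrict_Tspace]
  exact integrable_integral_update_mul_prod_mul
    (ν := fun k => volume.restrict (Set.Icc (a k) (abar k))) hf hG

theorem integral_mul_jointDens_eq_integral_interimExp (hab : a j ≤ abar j)
    (hf : IntegrableOn (f j) (Set.Icc (a j) (abar j)))
    (hf1 : ∫ τ in Set.Icc (a j) (abar j), f j τ = 1)
    (hG : IntegrableOn (fun t => G t * jointDens f t) (Tspace a abar)) :
    ∫ t in Tspace a abar, G t * jointDens f t =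
      ∫ τ in a j..abar j, interimExp a abar f j G τ * f j τ := by
  rw [intervalIntegral.integral_of_le hab, ← integral_Icc_eq_integral_Ioc]
  unfold interimExp
  rw [IntegrableOn, volume_restrict_Tspace] at hG
  rw [volume_restrict_Tspace, ← one_mul (∫ t, _ ∂_), ← hf1]
  exact integral_mul_integral_mul_prod
    (ν := fun k => volume.restrict (Set.Icc (a k) (abar k))) hf hG

theorem interimExp_comp_eval_mul (c : ℝ → ℝ) (τ : ℝ) :
    interimExp a abar f j (fun t => c (t j) * G t) τ = c τ * interimExp a abar f j G τ := by
  simp only [interimExp, Function.update_self, mul_assoc, integral_const_mul]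

theorem integrableOn_comp_eval_mul_mul_jointDens {c : ℝ → ℝ} {C : ℝ}
    (hf : ∀ k, IntegrableOn (f k) (Set.Icc (a k) (abar k)))
    (hc : IntegrableOn (fun τ => c τ * f j τ) (Set.Icc (a j) (abar j)))
    (hG : AEStronglyMeasurable G (volume.restrict (Tspace a abar)))
    (hGC : ∀ t ∈ Tspace a abar, |G t| ≤ C) :
    IntegrableOn (fun t => c (t j) * G t * jointDens f t) (Tspace a abar) := by
  have hcdens : IntegrableOn (fun t => c (t j) * jointDens f t) (Tspace a abar) := by
    rw [IntegrableOn, volume_restrict_Tspace]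
    exact integrable_comp_eval_mul_prod hf hc
  exact (hcdens.mul_bdd hG
    (ae_restrict_of_forall_mem (measurableSet_Tspace a abar) hGC)).congr
      (.of_forall fun t => mul_right_comm _ _ _)

theorem integral_virtualValue_mul_mul_jointDens {C : ℝ} (hab : a j ≤ abar j)
    (hf : ∀ k, IntegrableOn (f k) (Set.Icc (a k) (abar k)))
    (hf0 : ∀ τ ∈ Set.Icc (a j) (abar j), f j τ ≠ 0)
    (hf1 : ∫ τ in Set.Icc (a j) (abar j), f j τ = 1)
    (hG : AEStronglyMeasurable G (volume.restrict (Tspace a abar)))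
    (hGC : ∀ t ∈ Tspace a abar, |G t| ≤ C) :
    ∫ t in Tspace a abar, virtualValue (a j) (f j) (t j) * G t * jointDens f t =
      ∫ τ in a j..abar j, virtualValue (a j) (f j) τ * interimExp a abar f j G τ * f j τ := by
  have hvv : IntegrableOn (fun τ => virtualValue (a j) (f j) τ * f j τ)
      (Set.Icc (a j) (abar j)) := by
    rw [← intervalIntegrable_iff_integrableOn_Icc_of_le hab]
    refine intervalIntegrable_virtualValue_mul ?_ (Set.uIcc_of_le hab ▸ hf0)
    exact (intervalIntegrable_iff_integrableOn_Icc_of_le hab).2 (hf j)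
  rw [integral_mul_jointDens_eq_integral_interimExp hab (hf j) hf1
    (integrableOn_comp_eval_mul_mul_jointDens hf hvv hG hGC)]
  simp only [interimExp_comp_eval_mul]

end TypeSpace

theorem stmt_6_general {n m : ℕ} (θ : ℝ)
    (a abar : Fin n → ℝ) (hab : ∀ j, a j < abar j)
    (f : Fin n → ℝ → ℝ)
    (hfpos : ∀ j', ∀ t ∈ Set.Icc (a j') (abar j'), 0 < f j' t)
    (hfprob : ∀ j', ∫ t in Set.Icc (a j') (abar j'), f j' t = 1)
    (S : Fin n → Finset (Fin m))
    (p : (Fin n → ℝ) → Fin m → ℝ) (hpmeas : Measurable p)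
    (x : (Fin n → ℝ) → Fin n → ℝ) (j : Fin n) {C : ℝ}
    (hpC : ∀ t ∈ Tspace a abar, |∑ i ∈ S j, p t i| ≤ C)
    (hxint : IntegrableOn (fun t => x t j * jointDens f t) (Tspace a abar))
    (henv : ∀ t ∈ Set.Icc (a j) (abar j),
        vtld θ a abar f S p x j t
          = vtld θ a abar f S p x j (a j)
            + θ * ∫ τ in (a j)..t, interimAlloc a abar f S p j τ) :
    ∫ t in Tspace a abar, x t j * jointDens f t
      = -(vtld θ a abar f S p x j (a j))
        + θ * ∫ t in Tspace a abar,
            (t j - (1 - ∫ τ in (a j)..(t j), f j τ) / f j (t j))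
              * ((∑ i ∈ S j, p t i) * jointDens f t) := by
  have hle := (hab j).le
  have hf : ∀ k, IntegrableOn (f k) (Set.Icc (a k) (abar k)) := fun k =>
    .of_integral_ne_zero (by rw [hfprob k]; exact one_ne_zero)
  have hfj := (intervalIntegrable_iff_integrableOn_Icc_of_le hle).2 (hf j)
  have hf1 : ∫ τ in a j..abar j, f j τ = 1 := by
    rw [intervalIntegral.integral_of_le hle, ← integral_Icc_eq_integral_Ioc, hfprob j]
  have hf0 : ∀ τ ∈ Set.Icc (a j) (abar j), f j τ ≠ 0 := fun τ hτ => (hfpos j τ hτ).ne'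
  have hq : AEStronglyMeasurable (fun t => ∑ i ∈ S j, p t i) (volume.restrict (Tspace a abar)) :=
    Measurable.aestronglyMeasurable (by fun_prop)
  have hqint : IntegrableOn (fun t => (∑ i ∈ S j, p t i) * jointDens f t) (Tspace a abar) :=
    (integrableOn_jointDens hf).bdd_mul hq
      (ae_restrict_of_forall_mem (measurableSet_Tspace a abar) hpC)
  calc ∫ t in Tspace a abar, x t j * jointDens f t
    _ = ∫ τ in a j..abar j, interimPay a abar f x j τ * f j τ :=
      integral_mul_jointDens_eq_integral_interimExp hle (hf j) (hfprob j) hxint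
    _ = -(vtld θ a abar f S p x j (a j)) + θ * ∫ τ in a j..abar j,
          virtualValue (a j) (f j) τ * interimAlloc a abar f S p j τ * f j τ :=
      integral_payment_eq_of_envelope (intervalIntegrable_interimExp hle hf hq hpC) hfj
        (intervalIntegrable_interimExp_mul hle (hf j) hqint)
        (Set.uIcc_of_le hle ▸ hf0) hf1 (Set.uIcc_of_le hle ▸ henv)
    _ = -(vtld θ a abar f S p x j (a j)) + θ * ∫ t in Tspace a abar,
          virtualValue (a j) (f j) (t j) * (∑ i ∈ S j, p t i) * jointDens f t := by
      rw [integral_virtualValue_mul_mul_jointDens hle hf hf0 (hfprob j) hq hpC]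
      rfl
    _ = _ := by simp only [virtualValue, mul_assoc]

/-- Per-user payment identity (equation (45) in the proof of Lemma 2): under the
envelope condition for user j with monotone interim allocation, the expected
payment of user j equals
−ṽ_j(a_j) + θ ∫_T [ t_j − (1 − F_j(t_j))/f_j(t_j) ] (∑_{i∈S_j} p_i(t)) f(t) dt. -/
theorem stmt_6 {n m : ℕ} (θ : ℝ) (hθ : 0 < θ)
    (a abar : Fin n → ℝ) (hab : ∀ j, a j < abar j)
    (f : Fin n → ℝ → ℝ)
    (hfmeas : ∀ j, Measurable (f j))
    (hfpos : ∀ j', ∀ t ∈ Set.Icc (a j') (abar j'), 0 < f j' t)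
    (hfprob : ∀ j', ∫ t in Set.Icc (a j') (abar j'), f j' t = 1)
    (S : Fin n → Finset (Fin m))
    (p : (Fin n → ℝ) → Fin m → ℝ) (hpmeas : Measurable p)
    (hFF : ∀ t ∈ Tspace a abar, (∀ i, 0 ≤ p t i) ∧ ∑ i, p t i ≤ 1)
    (x : (Fin n → ℝ) → Fin n → ℝ) (hxmeas : Measurable x)
    (j : Fin n)
    (hxint : IntegrableOn (fun t => x t j * jointDens f t) (Tspace a abar))
    (hmono : MonotoneOn (interimAlloc a abar f S p j) (Set.Icc (a j) (abar j)))
    (henv : ∀ t ∈ Set.Icc (a j) (abar j),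
        vtld θ a abar f S p x j t
          = vtld θ a abar f S p x j (a j)
            + θ * ∫ τ in (a j)..t, interimAlloc a abar f S p j τ) :
    ∫ t in Tspace a abar, x t j * jointDens f t
      = -(vtld θ a abar f S p x j (a j))
        + θ * ∫ t in Tspace a abar,
            (t j - (1 - ∫ τ in (a j)..(t j), f j τ) / f j (t j))
              * ((∑ i ∈ S j, p t i) * jointDens f t) := by
  exact stmt_6_general θ a abar hab f hfpos hfprob S p hpmeas x j
    (fun t ht => abs_sum_le_of_nonneg_of_sum_univ_le (S j) (hFF t ht).1 (hFF t ht).2) hxint henv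

end Caching
end

section
/- Fix j ∈ {1,…,n}, τ_j, t_j ∈ T_j with τ_j ≤ t_j, and t_{−j} ∈ T_{−j}. Suppose each c_s is monotone increasing on T_s. If there exists l ∈ S_j that attains the maximum of W_i(τ_j, t_{−j}) over i ∈ {1,…,m} and W_l(τ_j, t_{−j}) > 0, then l also attains the maximum of W_i(t_j, t_{−j}) over i ∈ {1,…,m} and W_l(t_j, t_{−j}) > 0. (Case 1 of the monotonicity argument in the proof of Proposition 2.) -/
open Finset

/-- The virtual welfare of content i at type profile t:
W_i(t) = ∑_{s ∈ Ω_i} (θ c_s(t_s) − h(θ)) − r_i, where Ω_i = {j : i ∈ S_j}. -/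
def virtWelfare {n m : ℕ} (θ hval : ℝ) (r : Fin m → ℝ)
    (S : Fin n → Finset (Fin m)) (c : Fin n → ℝ → ℝ)
    (i : Fin m) (t : Fin n → ℝ) : ℝ :=
  (∑ s ∈ Finset.univ.filter fun j => i ∈ S j, (θ * c s (t s) - hval)) - r i

/-!
Raising the type of user `j` from `τj` to `tj` adds the same amount `θ * (c j tj - c j τj) ≥ 0` to
the virtual welfare of every content in `S j` and leaves all other virtual welfares unchanged. So no
content gains more than `l ∈ S j` does, and `l` keeps its lead.
-/

theorem sum_update_sub_sum_update {ι G : Type*} {α : ι → Type*} [DecidableEq ι] [AddCommGroup G]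
    (A : Finset ι) (f : ∀ s, α s → G) (t : ∀ s, α s) (j : ι) (x y : α j) :
    ∑ s ∈ A, f s (Function.update t j x s) - ∑ s ∈ A, f s (Function.update t j y s) =
      if j ∈ A then f j x - f j y else 0 := by
  have summand_eq_ite (s : ι) :
      f s (Function.update t j x s) - f s (Function.update t j y s) =
        if s = j then f j x - f j y else 0 := by
    rcases eq_or_ne s j with rfl | hsj
    · simp
    · simp [hsj]
  simp only [← Finset.sum_sub_distrib, summand_eq_ite, Finset.sum_ite_eq']

section VirtualWelfare

variable {n m : ℕ} (θ hval : ℝ) (r : Fin m → ℝ) (S : Fin n → Finset (Fin m))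
  (c : Fin n → ℝ → ℝ) (t : Fin n → ℝ) (j : Fin n) (x y : ℝ)

theorem virtWelfare_update_sub_virtWelfare_update (i : Fin m) :
    virtWelfare θ hval r S c i (Function.update t j y) -
        virtWelfare θ hval r S c i (Function.update t j x) =
      if i ∈ S j then θ * (c j y - c j x) else 0 := by
  have welfare_sum_sub := sum_update_sub_sum_update
    (Finset.univ.filter fun k => i ∈ S k) (fun s z => θ * c s z - hval) t j y x
  simp only [virtWelfare, sub_sub_sub_cancel_right, welfare_sum_sub, Finset.mem_filter,
    Finset.mem_univ, true_and, mul_sub]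

variable {θ S c j x y}

theorem virtWelfare_update_le_virtWelfare_update (hθ : 0 ≤ θ) (hc : c j x ≤ c j y) (i : Fin m) :
    virtWelfare θ hval r S c i (Function.update t j x) ≤
      virtWelfare θ hval r S c i (Function.update t j y) := by
  rw [← sub_nonneg, virtWelfare_update_sub_virtWelfare_update]
  split_ifs
  · exact mul_nonneg hθ (sub_nonneg.mpr hc)
  · exact le_rfl

theorem virtWelfare_update_sub_le_of_mem (hθ : 0 ≤ θ) (hc : c j x ≤ c j y) {l : Fin m}
    (hl : l ∈ S j) (i : Fin m) :
    virtWelfare θ hval r S c i (Function.update t j y) -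
        virtWelfare θ hval r S c i (Function.update t j x) ≤
      virtWelfare θ hval r S c l (Function.update t j y) -
        virtWelfare θ hval r S c l (Function.update t j x) := by
  simp only [virtWelfare_update_sub_virtWelfare_update, if_pos hl]
  split_ifs
  · exact le_rfl
  · exact mul_nonneg hθ (sub_nonneg.mpr hc)

end VirtualWelfare

theorem stmt_10_general {n m : ℕ} {θ : ℝ} (hval : ℝ) (hθ : 0 ≤ θ) (r : Fin m → ℝ)
    {S : Fin n → Finset (Fin m)} {c : Fin n → ℝ → ℝ} {j : Fin n} {τj tj : ℝ}
    (hc : c j τj ≤ c j tj) (t : Fin n → ℝ) {l : Fin m} (hl : l ∈ S j)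
    (hmax : ∀ i, virtWelfare θ hval r S c i (Function.update t j τj)
        ≤ virtWelfare θ hval r S c l (Function.update t j τj))
    (hpos : 0 < virtWelfare θ hval r S c l (Function.update t j τj)) :
    (∀ i, virtWelfare θ hval r S c i (Function.update t j tj)
        ≤ virtWelfare θ hval r S c l (Function.update t j tj)) ∧
    0 < virtWelfare θ hval r S c l (Function.update t j tj) := by
  refine ⟨fun i => ?_,
    hpos.trans_le (virtWelfare_update_le_virtWelfare_update hval r t hθ hc l)⟩
  have gain_le := virtWelfare_update_sub_le_of_mem hval r t hθ hc hl i
  linarith [hmax i]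

/-- Case 1 of the monotonicity argument in the proof of Proposition 2: if each
c_s is monotone increasing, τ_j ≤ t_j, and l ∈ S_j attains the maximum of the
virtual welfares at (τ_j, t_{−j}) with positive value, then l also attains the
maximum at (t_j, t_{−j}) with positive value. -/
theorem stmt_10 {n m : ℕ} (θ hval : ℝ) (hθ : 0 < θ) (hh : 0 ≤ hval)
    (r : Fin m → ℝ) (a abar : Fin n → ℝ)
    (S : Fin n → Finset (Fin m)) (c : Fin n → ℝ → ℝ)
    (hc : ∀ s, MonotoneOn (c s) (Set.Icc (a s) (abar s)))
    (j : Fin n) (τj tj : ℝ)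
    (hτ : τj ∈ Set.Icc (a j) (abar j)) (ht : tj ∈ Set.Icc (a j) (abar j))
    (hle : τj ≤ tj)
    (t : Fin n → ℝ) (htT : ∀ s, t s ∈ Set.Icc (a s) (abar s))
    (l : Fin m) (hl : l ∈ S j)
    (hmax : ∀ i, virtWelfare θ hval r S c i (Function.update t j τj)
        ≤ virtWelfare θ hval r S c l (Function.update t j τj))
    (hpos : 0 < virtWelfare θ hval r S c l (Function.update t j τj)) :
    (∀ i, virtWelfare θ hval r S c i (Function.update t j tj)
        ≤ virtWelfare θ hval r S c l (Function.update t j tj)) ∧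
    0 < virtWelfare θ hval r S c l (Function.update t j tj) := by
  exact stmt_10_general hval hθ.le r (hc j hτ ht hle) t hl hmax hpos
end

section
/- Fix t ∈ T and j ∈ {1,…,n}, and suppose each c_s is strictly increasing and continuous on T_s. Define β_j = max{0, max_{i∉S_j} (∑_{s∈Ω_i} (θ c_s(t_s) − h(θ)) − r_i)} and φ_j(τ) = θ c_j(τ) − h(θ) + max_{i∈S_j} (∑_{s∈Ω_i, s≠j} (θ c_s(t_s) − h(θ)) − r_i) for τ ∈ T_j. Then ∫_{a_j}^{t_j} ∑_{i∈S_j} p*_i(τ, t_{−j}) dτ equals: t_j − a_j if φ_j(a_j) ≥ β_j; 0 if φ_j(t_j) < β_j; and t_j − ξ_j if φ_j(a_j) < β_j ≤ φ_j(t_j), where ξ_j is the unique solution in [a_j, t_j] of φ_j(ξ_j) = β_j, i.e., ξ_j = c_j^{−1}( (1/θ)[ β_j + h(θ) − max_{i∈S_j} (∑_{s∈Ω_i, s≠j} (θ c_s(t_s) − h(θ)) − r_i) ] ). (Proposition 3.) -/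
open Finset MeasureTheory

/-!
Changing user `j`'s type from `t j` to `τ` shifts the welfare of every content in `S j` by the same
amount and leaves all other contents alone. Hence the best content in `S j`, of welfare `φ τ`,
competes against the fixed alternative `β` (the best other content, or caching nothing). The
allocation serves user `j` with probability one when `β < φ τ` and zero when `φ τ < β`. As `φ` is
strictly increasing, the integrand is a unit step, and the integral is the length of the part of
the interval to the right of the crossing point of `φ` and `β`.
-/

theorem isLUB_insert_zero_max_sSup {s : Set ℝ} (hs : BddAbove s) :
    IsLUB (insert 0 s) (max 0 (sSup s)) := by
  rcases s.eq_empty_or_nonempty with rfl | hne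
  · simp
  · exact (isLUB_csSup hne hs).insert 0

section StepIntegral

variable {g φ : ℝ → ℝ} {a b β ξ : ℝ}

theorem integral_eq_sub_of_eqOn_zero_of_eqOn_one (hξ : ξ ∈ Set.Icc a b)
    (hg₀ : Set.EqOn g 0 (Set.Ioo a ξ)) (hg₁ : Set.EqOn g 1 (Set.Ioo ξ b)) :
    ∫ τ in a..b, g τ = b - ξ := by
  have hint₀ : IntervalIntegrable g volume a ξ :=
    intervalIntegrable_const.congr_uIoo (Set.uIoo_of_le hξ.1 ▸ hg₀.symm)
  have hint₁ : IntervalIntegrable g volume ξ b :=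
    intervalIntegrable_const.congr_uIoo (Set.uIoo_of_le hξ.2 ▸ hg₁.symm)
  rw [← intervalIntegral.integral_add_adjacent_intervals hint₀ hint₁,
    intervalIntegral.integral_congr_Ioo_of_le hξ.1 hg₀,
    intervalIntegral.integral_congr_Ioo_of_le hξ.2 hg₁]
  simp

theorem integral_threshold_eq_sub_of_le_left (hab : a ≤ b) (hφ : StrictMonoOn φ (Set.Icc a b))
    (hg₁ : ∀ τ ∈ Set.Icc a b, β < φ τ → g τ = 1) (hβ : β ≤ φ a) :
    ∫ τ in a..b, g τ = b - a := by
  refine integral_eq_sub_of_eqOn_zero_of_eqOn_one (Set.left_mem_Icc.2 hab) (by simp) fun τ hτ => ?_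
  have hτ' := Set.Ioo_subset_Icc_self hτ
  exact hg₁ τ hτ' (hβ.trans_lt (hφ (Set.left_mem_Icc.2 hab) hτ' hτ.1))

theorem integral_threshold_eq_zero_of_right_lt (hab : a ≤ b) (hφ : MonotoneOn φ (Set.Icc a b))
    (hg₀ : ∀ τ ∈ Set.Icc a b, φ τ < β → g τ = 0) (hβ : φ b < β) :
    ∫ τ in a..b, g τ = 0 := by
  rw [← sub_self b]
  refine integral_eq_sub_of_eqOn_zero_of_eqOn_one (Set.right_mem_Icc.2 hab)
    (fun τ hτ => ?_) (by simp)
  have hτ' := Set.Ioo_subset_Icc_self hτ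
  exact hg₀ τ hτ' ((hφ hτ' (Set.right_mem_Icc.2 hab) hτ.2.le).trans_lt hβ)

theorem integral_threshold_eq_sub_of_crossing (hφ : StrictMonoOn φ (Set.Icc a b))
    (hg₀ : ∀ τ ∈ Set.Icc a b, φ τ < β → g τ = 0) (hg₁ : ∀ τ ∈ Set.Icc a b, β < φ τ → g τ = 1)
    (hξ : ξ ∈ Set.Icc a b) (hβ : φ ξ = β) :
    ∫ τ in a..b, g τ = b - ξ := by
  refine integral_eq_sub_of_eqOn_zero_of_eqOn_one hξ (fun τ hτ => ?_) fun τ hτ => ?_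
  · have hτ' : τ ∈ Set.Icc a b := ⟨hτ.1.le, hτ.2.le.trans hξ.2⟩
    exact hg₀ τ hτ' (hβ ▸ hφ hτ' hξ hτ.2)
  · have hτ' : τ ∈ Set.Icc a b := ⟨hξ.1.trans hτ.1.le, hτ.2.le⟩
    exact hg₁ τ hτ' (hβ ▸ hφ hξ hτ' hτ.1)

theorem existsUnique_crossing_integral_eq_sub (hab : a ≤ b) (hφ : StrictMonoOn φ (Set.Icc a b))
    (hφc : ContinuousOn φ (Set.Icc a b)) (hg₀ : ∀ τ ∈ Set.Icc a b, φ τ < β → g τ = 0)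
    (hg₁ : ∀ τ ∈ Set.Icc a b, β < φ τ → g τ = 1) (hβ : β ∈ Set.Icc (φ a) (φ b)) :
    ∃! ξ, ξ ∈ Set.Icc a b ∧ φ ξ = β ∧ ∫ τ in a..b, g τ = b - ξ := by
  obtain ⟨ξ, hξ, hξβ⟩ := intermediate_value_Icc hab hφc hβ
  refine ⟨ξ, ⟨hξ, hξβ, integral_threshold_eq_sub_of_crossing hφ hg₀ hg₁ hξ hξβ⟩, ?_⟩
  rintro ξ' ⟨hξ', hξ'β, -⟩
  exact hφ.injOn hξ' hξ (hξ'β.trans hξβ.symm)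

end StepIntegral

/-- `p` is a welfare-maximizing allocation of a single slot among alternatives with welfare `W`,
caching nothing being an additional alternative of welfare zero: `p` is the indicator of a maximizer
of `W` if some welfare is positive, and vanishes if none is. -/
def IsWelfareMaximizing {ι : Type*} (W p : ι → ℝ) : Prop :=
  ((∃ i, 0 < W i) → ∃ k, (∀ i, W i ≤ W k) ∧ p k = 1 ∧ ∀ i, i ≠ k → p i = 0) ∧
    ((∀ i, W i ≤ 0) → ∀ i, p i = 0)

namespace IsWelfareMaximizing

variable {ι : Type*} {W p : ι → ℝ} {A : Finset ι} {φ β : ℝ}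

theorem sum_eq_one_of_lt (hp : IsWelfareMaximizing W p) (hφ : IsLUB (W '' A) φ)
    (hβ : β ∈ upperBounds (insert 0 (W '' (A : Set ι)ᶜ))) (hlt : β < φ) :
    ∑ i ∈ A, p i = 1 := by
  obtain ⟨_, ⟨i, -, rfl⟩, hi⟩ := (lt_isLUB_iff hφ).1 hlt
  have hβ_nonneg : 0 ≤ β := hβ (Set.mem_insert 0 _)
  obtain ⟨k, hk_max, hk_one, hk_zero⟩ := hp.1 ⟨i, hβ_nonneg.trans_lt hi⟩
  have hkA : k ∈ A := by
    by_contra hkA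
    have hkβ : W k ≤ β := hβ (Set.mem_insert_of_mem _ (Set.mem_image_of_mem W hkA))
    exact (hi.trans_le (hk_max i)).not_ge hkβ
  rw [Finset.sum_eq_single_of_mem k hkA fun i _ => hk_zero i, hk_one]

theorem sum_eq_zero_of_lt (hp : IsWelfareMaximizing W p) (hφ : φ ∈ upperBounds (W '' A))
    (hβ : IsLUB (insert 0 (W '' (A : Set ι)ᶜ)) β) (hlt : φ < β) :
    ∑ i ∈ A, p i = 0 := by
  by_cases hpos : ∃ i, 0 < W i
  · obtain ⟨k, hk_max, -, hk_zero⟩ := hp.1 hpos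
    have hβk : β ≤ W k := by
      refine hβ.2 ?_
      rintro _ (rfl | ⟨i, -, rfl⟩)
      · exact hpos.elim fun i hi => hi.le.trans (hk_max i)
      · exact hk_max i
    have hkA : k ∉ A := fun hkA =>
      (hlt.trans_le hβk).not_ge (hφ (Set.mem_image_of_mem W hkA))
    exact Finset.sum_eq_zero fun i hi => hk_zero i (ne_of_mem_of_not_mem hi hkA)
  · push Not at hpos
    exact Finset.sum_eq_zero fun i _ => hp.2 hpos i

end IsWelfareMaximizing

section Deviation

variable {n m : ℕ}

/-- The part of the virtual welfare of content `i` that does not come from user `j`: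
`∑_{s ∈ Ω_i, s ≠ j} (θ c_s(t_s) − h(θ)) − r_i`. -/
def othersWelfare (θ hval : ℝ) (r : Fin m → ℝ) (S : Fin n → Finset (Fin m)) (c : Fin n → ℝ → ℝ)
    (t : Fin n → ℝ) (j : Fin n) (i : Fin m) : ℝ :=
  (∑ s ∈ (Finset.univ.filter fun j' => i ∈ S j').erase j, (θ * c s (t s) - hval)) - r i

/-- The paper's `φ_j(τ)`: the best virtual welfare of a content interesting user `j` when the type
of user `j` is `τ` and the other types are given by `t`. -/
def insideWelfare (θ hval : ℝ) (r : Fin m → ℝ) (S : Fin n → Finset (Fin m)) (c : Fin n → ℝ → ℝ)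
    (t : Fin n → ℝ) (j : Fin n) (hSj : (S j).Nonempty) (τ : ℝ) : ℝ :=
  θ * c j τ - hval + (S j).sup' hSj (othersWelfare θ hval r S c t j)

/-- The paper's `β_j`: the best virtual welfare attainable without serving user `j`, by caching
either nothing or a content outside `S j`. If there is no such content the supremum has the junk
value `sSup ∅ = 0`, which agrees with caching nothing. -/
noncomputable def outsideWelfare (θ hval : ℝ) (r : Fin m → ℝ) (S : Fin n → Finset (Fin m))
    (c : Fin n → ℝ → ℝ) (t : Fin n → ℝ) (j : Fin n) : ℝ :=
  max 0 (sSup ((fun i => virtWelfare θ hval r S c i t) '' {i | i ∉ S j}))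

variable {θ hval : ℝ} {r : Fin m → ℝ} {S : Fin n → Finset (Fin m)} {c : Fin n → ℝ → ℝ}
  {t : Fin n → ℝ} {j : Fin n}

theorem virtWelfare_update_of_mem {i : Fin m} (hi : i ∈ S j) (τ : ℝ) :
    virtWelfare θ hval r S c i (Function.update t j τ) =
      θ * c j τ - hval + othersWelfare θ hval r S c t j i := by
  have hj : j ∈ Finset.univ.filter fun j' => i ∈ S j' := by simpa using hi
  have hothers : ∀ s ∈ (Finset.univ.filter fun j' => i ∈ S j').erase j,
      θ * c s (Function.update t j τ s) - hval = θ * c s (t s) - hval := fun s hs => by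
    rw [Function.update_of_ne (Finset.ne_of_mem_erase hs)]
  rw [virtWelfare, othersWelfare, ← Finset.add_sum_erase _ _ hj, Finset.sum_congr rfl hothers,
    Function.update_self, add_sub_assoc]

theorem virtWelfare_update_of_notMem {i : Fin m} (hi : i ∉ S j) (τ : ℝ) :
    virtWelfare θ hval r S c i (Function.update t j τ) = virtWelfare θ hval r S c i t := by
  refine congrArg (· - r i) (Finset.sum_congr rfl fun s hs => ?_)
  have hsj : s ≠ j := by
    rintro rfl
    exact hi (Finset.mem_filter.1 hs).2
  rw [Function.update_of_ne hsj]

theorem isLUB_insideWelfare (hSj : (S j).Nonempty) (τ : ℝ) :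
    IsLUB ((fun i => virtWelfare θ hval r S c i (Function.update t j τ)) '' S j)
      (insideWelfare θ hval r S c t j hSj τ) := by
  rw [Set.image_congr fun i hi => virtWelfare_update_of_mem (Finset.mem_coe.1 hi) τ,
    insideWelfare, Finset.add_sup', Finset.sup'_eq_csSup_image]
  exact isLUB_csSup (hSj.to_set.image _) ((S j).finite_toSet.image _).bddAbove

theorem isLUB_outsideWelfare (τ : ℝ) :
    IsLUB (insert 0 ((fun i => virtWelfare θ hval r S c i (Function.update t j τ)) ''
      (S j : Set (Fin m))ᶜ)) (outsideWelfare θ hval r S c t j) := by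
  rw [Set.image_congr fun i (hi : i ∈ (S j : Set (Fin m))ᶜ) => virtWelfare_update_of_notMem hi τ]
  exact isLUB_insert_zero_max_sSup (Set.toFinite _).bddAbove

theorem strictMonoOn_insideWelfare (hθ : 0 < θ) (hSj : (S j).Nonempty) {T : Set ℝ}
    (hc : StrictMonoOn (c j) T) : StrictMonoOn (insideWelfare θ hval r S c t j hSj) T :=
  fun _ hx _ hy hxy => by
    unfold insideWelfare
    gcongr
    exact hc hx hy hxy

theorem continuousOn_insideWelfare (hSj : (S j).Nonempty) {T : Set ℝ}
    (hc : ContinuousOn (c j) T) : ContinuousOn (insideWelfare θ hval r S c t j hSj) T := by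
  unfold insideWelfare
  fun_prop

end Deviation

theorem stmt_13_general {n m : ℕ} {θ hval : ℝ} (hθ : 0 < θ) {r : Fin m → ℝ}
    {S : Fin n → Finset (Fin m)} {c : Fin n → ℝ → ℝ} {t : Fin n → ℝ} {j : Fin n} {a : ℝ}
    (hat : a ≤ t j) (hSj : (S j).Nonempty) (hcmono : StrictMonoOn (c j) (Set.Icc a (t j)))
    (hccont : ContinuousOn (c j) (Set.Icc a (t j))) {p : ℝ → Fin m → ℝ}
    (hp : ∀ τ ∈ Set.Icc a (t j), IsWelfareMaximizing
      (fun i => virtWelfare θ hval r S c i (Function.update t j τ)) (p τ)) :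
    let β := outsideWelfare θ hval r S c t j
    let φ := insideWelfare θ hval r S c t j hSj
    (β ≤ φ a → ∫ τ in a..(t j), ∑ i ∈ S j, p τ i = t j - a) ∧
    (φ (t j) < β → ∫ τ in a..(t j), ∑ i ∈ S j, p τ i = 0) ∧
    (φ a < β → β ≤ φ (t j) →
      ∃! ξ, ξ ∈ Set.Icc a (t j) ∧ φ ξ = β ∧
        ∫ τ in a..(t j), ∑ i ∈ S j, p τ i = t j - ξ) := by
  intro β φ
  have hφ : StrictMonoOn φ (Set.Icc a (t j)) := strictMonoOn_insideWelfare hθ hSj hcmono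
  have hφc : ContinuousOn φ (Set.Icc a (t j)) := continuousOn_insideWelfare hSj hccont
  have hserved : ∀ τ ∈ Set.Icc a (t j), β < φ τ → ∑ i ∈ S j, p τ i = 1 := fun τ hτ =>
    (hp τ hτ).sum_eq_one_of_lt (isLUB_insideWelfare hSj τ) (isLUB_outsideWelfare τ).1
  have hunserved : ∀ τ ∈ Set.Icc a (t j), φ τ < β → ∑ i ∈ S j, p τ i = 0 := fun τ hτ =>
    (hp τ hτ).sum_eq_zero_of_lt (isLUB_insideWelfare hSj τ).1 (isLUB_outsideWelfare τ)
  exact ⟨integral_threshold_eq_sub_of_le_left hat hφ hserved,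
    integral_threshold_eq_zero_of_right_lt hat hφ.monotoneOn hunserved,
    fun hβa hβt => existsUnique_crossing_integral_eq_sub hat hφ hφc hunserved hserved
      ⟨hβa.le, hβt⟩⟩

/-- Proposition 3: the threshold structure of the integral
∫_{a_j}^{t_j} ∑_{i∈S_j} p*_i(τ, t_{−j}) dτ appearing in the optimal payment.
Here β_j = max{0, max_{i∉S_j} W_i(t)},
φ_j(τ) = θ c_j(τ) − h(θ) + max_{i∈S_j} (∑_{s∈Ω_i, s≠j}(θ c_s(t_s) − h(θ)) − r_i),
and p* is the virtual-welfare-maximizing allocation: at every feasible type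
profile, if some W_i is positive then p* puts the whole cache on a maximizer of
the virtual welfare, and otherwise p* caches nothing. -/
theorem stmt_13 {n m : ℕ} (hm : 0 < m) (θ hval : ℝ) (hθ : 0 < θ) (hh : 0 ≤ hval)
    (r : Fin m → ℝ) (a abar : Fin n → ℝ) (hab : ∀ s, a s < abar s)
    (S : Fin n → Finset (Fin m)) (hS : ∀ j, (S j).Nonempty)
    (c : Fin n → ℝ → ℝ)
    (hcmono : ∀ s, StrictMonoOn (c s) (Set.Icc (a s) (abar s)))
    (hccont : ∀ s, ContinuousOn (c s) (Set.Icc (a s) (abar s)))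
    (pstar : (Fin n → ℝ) → Fin m → ℝ)
    (hp1 : ∀ t : Fin n → ℝ, (∀ s, t s ∈ Set.Icc (a s) (abar s)) →
        (∃ i, 0 < virtWelfare θ hval r S c i t) →
        ∃ k, (∀ i, virtWelfare θ hval r S c i t ≤ virtWelfare θ hval r S c k t) ∧
          pstar t k = 1 ∧ ∀ i, i ≠ k → pstar t i = 0)
    (hp2 : ∀ t : Fin n → ℝ, (∀ s, t s ∈ Set.Icc (a s) (abar s)) →
        (∀ i, virtWelfare θ hval r S c i t ≤ 0) → ∀ i, pstar t i = 0)
    (t : Fin n → ℝ) (htT : ∀ s, t s ∈ Set.Icc (a s) (abar s)) (j : Fin n) :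
    let βj : ℝ := max 0 (sSup ((fun i => virtWelfare θ hval r S c i t) '' {i | i ∉ S j}))
    let φj : ℝ → ℝ := fun τ => θ * c j τ - hval +
        (S j).sup' (hS j) fun i =>
          (∑ s ∈ (Finset.univ.filter fun j' => i ∈ S j').erase j,
            (θ * c s (t s) - hval)) - r i
    (βj ≤ φj (a j) →
      (∫ τ in (a j)..(t j), ∑ i ∈ S j, pstar (Function.update t j τ) i)
        = t j - a j) ∧
    (φj (t j) < βj →
      (∫ τ in (a j)..(t j), ∑ i ∈ S j, pstar (Function.update t j τ) i) = 0) ∧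
    (φj (a j) < βj → βj ≤ φj (t j) →
      ∃! ξ, ξ ∈ Set.Icc (a j) (t j) ∧ φj ξ = βj ∧
        (∫ τ in (a j)..(t j), ∑ i ∈ S j, pstar (Function.update t j τ) i)
          = t j - ξ) := by
  have hsub : Set.Icc (a j) (t j) ⊆ Set.Icc (a j) (abar j) := Set.Icc_subset_Icc_right (htT j).2
  have hfeasible : ∀ τ ∈ Set.Icc (a j) (t j), ∀ s,
      Function.update t j τ s ∈ Set.Icc (a s) (abar s) := fun τ hτ s =>
    (Set.update_mem_pi_iff_of_mem fun s _ => htT s).2 (fun _ => hsub hτ) s (Set.mem_univ s)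
  exact stmt_13_general hθ (htT j).1 (hS j) ((hcmono j).mono hsub) ((hccont j).mono hsub)
    fun τ hτ => ⟨hp1 _ (hfeasible τ hτ), hp2 _ (hfeasible τ hτ)⟩
end
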